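/- Let T : M → M be a monotone distributional transform. Then T commutes with the set 𝒰 of all utility transforms (i.e., 𝒰 ∘ T = T ∘ 𝒰 as sets of maps) if and only if T = T_d ∘ T^u for some distortion function d ∈ F_D and some strictly increasing, continuous, surjective u : ℝ → ℝ. -/

import Mathlib

/-!
Write `T ∘ T^u = T^{u'} ∘ T` as "`T` intertwines `u` and `u'`". Distortions intertwine every utility
function with itself, and `T^v` intertwines `u` and `u'` when `v ∘ u = u' ∘ v`; for an increasing
bijection `v` this equation can be solved for `u'` given `u` and for `u` given `u'`.

Conversely, commutation with constant utilities shows that `T` maps point masses to point masses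
through a surjection `v`, and matched utilities satisfy `v ∘ u = u' ∘ v`. As affine utilities move
any two points to points separated by `v`, the map `v` is injective; it is increasing because `T`
respects the order of point masses. So `S = T ∘ T^{v⁻¹}` intertwines each utility with itself and
fixes point masses. Let `d p` be the value on `[0, 1)` of the image under `S` of the two-point
distribution with level `p`. To compare `S F` with `d ∘ F` at `x`, open a gap of length one in `F`
just above `x`: closing the gap gives back `F`, while a ramp across the gap gives the two-point
distribution with level `F x`. Hence `S F y ≤ d (F x) ≤ S F x` for `y < x`, which makes `S F` the
right limit of `d ∘ F`; for `F` the uniform distribution on `[0, 1]`, the same inequalities show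
that `d` is increasing.
-/

open MeasureTheory Filter Topology Set

noncomputable section

/-- The set of cdfs of compactly supported probability distributions on ℝ:
increasing, right-continuous, equal to `0` for all sufficiently small `x` and
equal to `1` for all sufficiently large `x`. -/
def mSet : Set (ℝ → ℝ) :=
  {F | Monotone F ∧ (∀ x, ContinuousWithinAt F (Set.Ici x) x) ∧
    (∃ a, ∀ x ≤ a, F x = 0) ∧ (∃ b, ∀ x, b ≤ x → F x = 1)}

/-- The set of cdfs of all probability distributions on ℝ: increasing,
right-continuous, with limit `0` at `-∞` and limit `1` at `+∞`. -/
def m0Set : Set (ℝ → ℝ) :=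
  {F | Monotone F ∧ (∀ x, ContinuousWithinAt F (Set.Ici x) x) ∧
    Tendsto F atBot (𝓝 0) ∧ Tendsto F atTop (𝓝 1)}

/-- A utility function: increasing (non-strict) and continuous. -/
def IsUF (u : ℝ → ℝ) : Prop := Monotone u ∧ Continuous u

/-- An increasing and left-continuous function on ℝ. -/
def IsLeftCtsIncr (u : ℝ → ℝ) : Prop :=
  Monotone u ∧ ∀ x, ContinuousWithinAt u (Set.Iic x) x

/-- A distortion function: an increasing function `d : [0,1] → [0,1]` with
`d 0 = 0` and `d 1 = 1` (values outside `[0,1]` are irrelevant). -/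
def IsDF (d : ℝ → ℝ) : Prop :=
  MonotoneOn d (Set.Icc 0 1) ∧ d 0 = 0 ∧ d 1 = 1

/-- Right-continuity of a distortion function on `[0,1)`. -/
def DFRightCts (d : ℝ → ℝ) : Prop :=
  ∀ x ∈ Set.Ico (0:ℝ) 1, ContinuousWithinAt d (Set.Ioi x) x

/-- A distortion function with moreover `d(0+) = 0` and `d(1-) = 1`. -/
def IsDFhat (d : ℝ → ℝ) : Prop :=
  IsDF d ∧ Tendsto d (𝓝[>] (0:ℝ)) (𝓝 0) ∧ Tendsto d (𝓝[<] (1:ℝ)) (𝓝 1)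

/-- The probability distortion generated by `d`:  `T_d F x = (d ∘ F)(x+)`,
the right limit of `d ∘ F` at `x`. -/
noncomputable def distortT (d F : ℝ → ℝ) : ℝ → ℝ :=
  fun x => Function.rightLim (d ∘ F) x

/-- The utility transform `T^u`: it maps a cdf `F` to the cdf of the
pushforward under `u` of the probability measure with cdf `F`. -/
noncomputable def utilityT (u F : ℝ → ℝ) : ℝ → ℝ := by
  classical
  exact
    if h : Monotone F ∧ ∀ x, ContinuousWithinAt F (Set.Ici x) x then
      fun x => ((StieltjesFunction.measure ⟨F, h.1, h.2⟩).map u (Set.Iic x)).toReal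
    else F

/-- Left quantile `F_L^{-1}(p) = inf {x | F x ≥ p}`. -/
noncomputable def leftQ (F : ℝ → ℝ) (p : ℝ) : ℝ := sInf {x | p ≤ F x}

/-- Right quantile `F_R^{-1}(p) = inf {x | F x > p}`. -/
noncomputable def rightQ (F : ℝ → ℝ) (p : ℝ) : ℝ := sInf {x | p < F x}

open ProbabilityTheory

/-! ### Cdfs -/

lemma mem_Icc_of_mem_mSet {F : ℝ → ℝ} (hF : F ∈ mSet) (x : ℝ) : F x ∈ Icc (0 : ℝ) 1 := by
  obtain ⟨hm, -, ⟨a, ha⟩, ⟨b, hb⟩⟩ := hF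
  constructor
  · rw [← ha (min a x) (min_le_left _ _)]
    exact hm (min_le_right _ _)
  · rw [← hb (max b x) (le_max_left _ _)]
    exact hm (le_max_right _ _)

lemma mem_mSet_of_eq_zero_of_eq_one {F : ℝ → ℝ} {a b : ℝ} (hm : Monotone F)
    (hc : ∀ x, ContinuousWithinAt F (Ici x) x) (h01 : ∀ x, F x ∈ Icc (0 : ℝ) 1)
    (ha : F a = 0) (hb : F b = 1) : F ∈ mSet :=
  ⟨hm, hc, ⟨a, fun x hx => le_antisymm ((hm hx).trans ha.le) (h01 x).1⟩,
    ⟨b, fun x hx => le_antisymm (h01 x).2 (hb.ge.trans (hm hx))⟩⟩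

lemma cdf_mem_mSet {μ : Measure ℝ} {a b : ℝ} (ha : cdf μ a = 0) (hb : cdf μ b = 1) :
    ⇑(cdf μ) ∈ mSet :=
  mem_mSet_of_eq_zero_of_eq_one (monotone_cdf μ) (cdf μ).right_continuous
    (fun x => ⟨cdf_nonneg μ x, cdf_le_one μ x⟩) ha hb

lemma exists_cdf_eq {F : ℝ → ℝ} (hF : F ∈ mSet) :
    ∃ μ : Measure ℝ, IsProbabilityMeasure μ ∧ ⇑(cdf μ) = F := by
  obtain ⟨hm, hc, ⟨a, ha⟩, ⟨b, hb⟩⟩ := hF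
  have hbot : Tendsto F atBot (𝓝 0) :=
    tendsto_const_nhds.congr' ((eventually_le_atBot a).mono fun x hx => (ha x hx).symm)
  have htop : Tendsto F atTop (𝓝 1) :=
    tendsto_const_nhds.congr' ((eventually_ge_atTop b).mono fun x hx => (hb x hx).symm)
  let f : StieltjesFunction ℝ := ⟨F, hm, hc⟩
  exact ⟨f.measure, f.isProbabilityMeasure hbot htop,
    congrArg _ (cdf_measure_stieltjesFunction f hbot htop)⟩

lemma convex_mSet : Convex ℝ mSet := by
  rintro F ⟨hF, hFc, ⟨a, ha⟩, ⟨b, hb⟩⟩ G ⟨hG, hGc, ⟨a', ha'⟩, ⟨b', hb'⟩⟩ s t hs ht hst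
  refine ⟨(hF.const_mul hs).add (hG.const_mul ht),
    fun x => ((hFc x).const_smul s).add ((hGc x).const_smul t),
    ⟨min a a', fun x hx => ?_⟩, ⟨max b b', fun x hx => ?_⟩⟩
  · simp [ha x (hx.trans (min_le_left _ _)), ha' x (hx.trans (min_le_right _ _))]
  · simp [hb x ((le_max_left _ _).trans hx), hb' x ((le_max_right _ _).trans hx), hst]

/-! ### Utility transforms -/

lemma utilityT_cdf {u : ℝ → ℝ} (hu : Measurable u) (μ : Measure ℝ) [IsProbabilityMeasure μ] :
    utilityT u (cdf μ) = cdf (μ.map u) := by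
  have := Measure.isProbabilityMeasure_map (μ := μ) hu.aemeasurable
  ext x
  rw [utilityT, dif_pos ⟨monotone_cdf μ, (cdf μ).right_continuous⟩, cdf_eq_real]
  exact congrArg (fun ν : Measure ℝ => (ν.map u).real (Iic x)) (measure_cdf μ)

lemma utilityT_comp {u v F : ℝ → ℝ} (hu : Measurable u) (hv : Measurable v) (hF : F ∈ mSet) :
    utilityT u (utilityT v F) = utilityT (u ∘ v) F := by
  obtain ⟨μ, _, rfl⟩ := exists_cdf_eq hF
  have := Measure.isProbabilityMeasure_map (μ := μ) hv.aemeasurable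
  rw [utilityT_cdf hv, utilityT_cdf hu, utilityT_cdf (hu.comp hv), Measure.map_map hu hv]

lemma utilityT_id {F : ℝ → ℝ} (hF : F ∈ mSet) : utilityT id F = F := by
  obtain ⟨μ, _, rfl⟩ := exists_cdf_eq hF
  rw [utilityT_cdf measurable_id, Measure.map_id]

/-- A measure-free description of "`G` is the cdf of `u(X)` when `X` has cdf `F`", for increasing
`u`: each `{u ≤ x}` is a lower set, so `G x` is squeezed between the values of `F` on the two sides
of its endpoint. -/
structure IsPushforward (u F G : ℝ → ℝ) : Prop where
  le_of_le : ∀ ⦃a x⦄, u a ≤ x → F a ≤ G x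
  le_of_lt : ∀ ⦃a x⦄, x < u a → G x ≤ F a

lemma isPushforward_utilityT {u F : ℝ → ℝ} (hu : Monotone u) (hF : F ∈ mSet) :
    IsPushforward u F (utilityT u F) := by
  obtain ⟨μ, _, rfl⟩ := exists_cdf_eq hF
  have := Measure.isProbabilityMeasure_map (μ := μ) hu.measurable.aemeasurable
  have hreal (x : ℝ) : utilityT u (cdf μ) x = μ.real (u ⁻¹' Iic x) := by
    rw [utilityT_cdf hu.measurable, cdf_eq_real,
      map_measureReal_apply hu.measurable measurableSet_Iic]
  refine ⟨fun a x hax => ?_, fun a x hxa => ?_⟩ <;> rw [hreal, cdf_eq_real]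
  · exact measureReal_mono fun b hb => (hu hb).trans hax
  · exact measureReal_mono fun b hb => (hu.reflect_lt (hb.trans_lt hxa)).le

lemma utilityT_mem_mSet {u F : ℝ → ℝ} (hu : Monotone u) (hF : F ∈ mSet) :
    utilityT u F ∈ mSet := by
  have hpush := isPushforward_utilityT hu hF
  obtain ⟨-, -, ⟨a, ha⟩, ⟨b, hb⟩⟩ := id hF
  obtain ⟨μ, _, rfl⟩ := exists_cdf_eq hF
  rw [utilityT_cdf hu.measurable] at hpush ⊢
  exact cdf_mem_mSet
    (((hpush.le_of_lt (sub_one_lt (u a))).trans_eq (ha a le_rfl)).antisymm (cdf_nonneg _ _))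
    ((cdf_le_one _ _).antisymm ((hb b le_rfl).ge.trans (hpush.le_of_le le_rfl)))

/-- Between two values of `u`, every level is attained by continuity and separates `G` from `G'`;
right-continuity of `G'` then applies. -/
lemma IsPushforward.le {u F G G' : ℝ → ℝ} (hu : Continuous u) (hF : F ∈ mSet) (hG : G ∈ mSet)
    (hG' : G' ∈ mSet) (h : IsPushforward u F G) (h' : IsPushforward u F G') : G ≤ G' := by
  intro x
  by_cases! hlow : ∀ a, x < u a
  · obtain ⟨a, ha⟩ := hF.2.2.1
    calc G x ≤ F a := h.le_of_lt (hlow a)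
      _ = 0 := ha a le_rfl
      _ ≤ G' x := (mem_Icc_of_mem_mSet hG' x).1
  by_cases! hhigh : ∀ b, u b ≤ x
  · obtain ⟨b, hb⟩ := hF.2.2.2
    calc G x ≤ 1 := (mem_Icc_of_mem_mSet hG x).2
      _ = F b := (hb b le_rfl).symm
      _ ≤ G' x := h'.le_of_le (hhigh b)
  obtain ⟨p, hp⟩ := hlow
  obtain ⟨q, hq⟩ := hhigh
  have hlim : Tendsto G' (𝓝[>] x) (𝓝 (G' x)) := continuousWithinAt_Ioi_iff_Ici.2 (hG'.2.1 x)
  refine ge_of_tendsto hlim ?_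
  filter_upwards [Ioo_mem_nhdsGT hq] with y hy
  obtain ⟨a, rfl⟩ := mem_range_of_exists_le_of_exists_ge hu ⟨p, hp.trans hy.1.le⟩ ⟨q, hy.2.le⟩
  exact (h.le_of_lt hy.1).trans (h'.le_of_le le_rfl)

lemma IsPushforward.utilityT_eq {u F G : ℝ → ℝ} (h : IsPushforward u F G) (hu : IsUF u)
    (hF : F ∈ mSet) (hG : G ∈ mSet) : utilityT u F = G :=
  have hmem := utilityT_mem_mSet hu.1 hF
  have hpush := isPushforward_utilityT hu.1 hF
  le_antisymm (hpush.le hu.2 hF hmem hG h) (h.le hu.2 hF hG hmem hpush)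

lemma comp_mem_mSet_of_surjective {u F : ℝ → ℝ} (hu : IsUF u) (hsurj : Function.Surjective u)
    (hF : F ∈ mSet) : F ∘ u ∈ mSet := by
  obtain ⟨a, ha⟩ := hF.2.2.1
  obtain ⟨b, hb⟩ := hF.2.2.2
  obtain ⟨a, rfl⟩ := hsurj a
  obtain ⟨b, rfl⟩ := hsurj b
  exact mem_mSet_of_eq_zero_of_eq_one (hF.1.comp hu.1)
    (fun x => (hF.2.1 (u x)).comp hu.2.continuousWithinAt fun _ hy => hu.1 hy)
    (fun x => mem_Icc_of_mem_mSet hF (u x)) (ha _ le_rfl) (hb _ le_rfl)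

lemma utilityT_comp_self_of_surjective {u F : ℝ → ℝ} (hu : IsUF u)
    (hsurj : Function.Surjective u) (hF : F ∈ mSet) : utilityT u (F ∘ u) = F :=
  have hpush : IsPushforward u (F ∘ u) F := ⟨fun _ _ h => hF.1 h, fun _ _ h => hF.1 h.le⟩
  hpush.utilityT_eq hu (comp_mem_mSet_of_surjective hu hsurj hF) hF

/-! ### Point masses, two-point distributions and the uniform distribution -/

/-- The cdf of the point mass at `c`. -/
def pointMass (c : ℝ) : ℝ → ℝ := cdf (Measure.dirac c)

lemma pointMass_apply (c x : ℝ) : pointMass c x = if c ≤ x then 1 else 0 := by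
  simp [pointMass, cdf_eq_real, measureReal_def, indicator_apply, apply_ite]

lemma pointMass_mem_mSet (c : ℝ) : pointMass c ∈ mSet :=
  cdf_mem_mSet (a := c - 1) (b := c) ((pointMass_apply c _).trans (if_neg (by linarith)))
    ((pointMass_apply c _).trans (if_pos le_rfl))

lemma pointMass_le_pointMass_iff {b c : ℝ} : pointMass b ≤ pointMass c ↔ c ≤ b := by
  refine ⟨fun h => ?_, fun h x => ?_⟩
  · by_contra hcb
    have := h b
    simp only [pointMass_apply, le_refl, if_true, if_neg hcb] at this
    linarith
  · simp only [pointMass_apply]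
    split_ifs <;> linarith

lemma pointMass_injective : Function.Injective pointMass := fun _ _ h =>
  le_antisymm (pointMass_le_pointMass_iff.1 h.ge) (pointMass_le_pointMass_iff.1 h.le)

lemma utilityT_pointMass {u : ℝ → ℝ} (hu : Measurable u) (c : ℝ) :
    utilityT u (pointMass c) = pointMass (u c) := by
  rw [pointMass, utilityT_cdf hu, Measure.map_dirac' hu, pointMass]

lemma utilityT_const (c : ℝ) {F : ℝ → ℝ} (hF : F ∈ mSet) :
    utilityT (fun _ => c) F = pointMass c := by
  obtain ⟨μ, _, rfl⟩ := exists_cdf_eq hF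
  rw [utilityT_cdf measurable_const, Measure.map_const, measure_univ, one_smul, pointMass]

/-- The cdf of the distribution with mass `p` at `0` and mass `1 - p` at `1`; its level on `[0, 1)`
is `p`. -/
def twoPoint (p : ℝ) : ℝ → ℝ := p • pointMass 0 + (1 - p) • pointMass 1

lemma twoPoint_apply (p x : ℝ) :
    twoPoint p x = if x < 0 then 0 else if x < 1 then p else 1 := by
  simp only [twoPoint, Pi.add_apply, Pi.smul_apply, smul_eq_mul, pointMass_apply]
  split_ifs <;> linarith

lemma twoPoint_mem_mSet {p : ℝ} (hp : p ∈ Icc (0 : ℝ) 1) : twoPoint p ∈ mSet :=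
  convex_mSet (pointMass_mem_mSet 0) (pointMass_mem_mSet 1) hp.1 (sub_nonneg.2 hp.2)
    (add_sub_cancel _ _)

lemma twoPoint_zero : twoPoint 0 = pointMass 1 := by simp [twoPoint]

lemma twoPoint_one : twoPoint 1 = pointMass 0 := by simp [twoPoint]

/-- The cdf of the uniform distribution on `[0, 1]`, which also serves as a utility function. -/
def ramp (z : ℝ) : ℝ := max 0 (min 1 z)

lemma ramp_of_mem_Icc {z : ℝ} (hz : z ∈ Icc (0 : ℝ) 1) : ramp z = z := by
  rw [ramp, min_eq_right hz.2, max_eq_right hz.1]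

lemma isUF_ramp : IsUF ramp :=
  ⟨monotone_const.max (monotone_const.min monotone_id), by unfold ramp; fun_prop⟩

lemma ramp_mem_mSet : ramp ∈ mSet :=
  mem_mSet_of_eq_zero_of_eq_one isUF_ramp.1 (fun _ => isUF_ramp.2.continuousWithinAt)
    (fun _ => ⟨le_max_left _ _, max_le zero_le_one (min_le_left _ _)⟩)
    (ramp_of_mem_Icc (left_mem_Icc.2 zero_le_one)) (ramp_of_mem_Icc (right_mem_Icc.2 zero_le_one))

/-! ### Opening a gap in a distribution -/

/-- The utility function that collapses `[x, x + 1]` to `x`. For a cdf `F`, the cdf `F ∘ collapse x`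
arises from `F` by moving the mass above `x` up by one. -/
def collapse (x z : ℝ) : ℝ := max (min z x) (z - 1)

lemma collapse_of_mem_Icc {x z : ℝ} (hz : z ∈ Icc x (x + 1)) : collapse x z = x := by
  rw [collapse, min_eq_right hz.1, max_eq_left (by linarith [hz.2])]

lemma isUF_collapse (x : ℝ) : IsUF (collapse x) :=
  ⟨(monotone_id.min monotone_const).max fun _ _ h => sub_le_sub_right h 1,
    by unfold collapse; fun_prop⟩

lemma surjective_collapse (x : ℝ) : Function.Surjective (collapse x) := by
  intro y
  rcases le_total y x with h | h
  · exact ⟨y, by rw [collapse, min_eq_left h, max_eq_left (by linarith)]⟩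
  · exact ⟨y + 1, by rw [collapse, min_eq_right (by linarith), max_eq_right (by linarith)]; ring⟩

lemma isUF_ramp_sub (x : ℝ) : IsUF fun z => ramp (z - x) :=
  ⟨fun _ _ h => isUF_ramp.1 (sub_le_sub_right h x), isUF_ramp.2.comp (continuous_sub_right x)⟩

lemma utilityT_ramp_comp_collapse {F : ℝ → ℝ} (hF : F ∈ mSet) (x : ℝ) :
    utilityT (fun z => ramp (z - x)) (F ∘ collapse x) = twoPoint (F x) := by
  have hgap := comp_mem_mSet_of_surjective (isUF_collapse x) (surjective_collapse x) hF
  have h01 := mem_Icc_of_mem_mSet hgap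
  have hx : F (collapse x x) = F x := by rw [collapse_of_mem_Icc ⟨le_rfl, by linarith⟩]
  have hx' : F (collapse x (x + 1)) = F x := by rw [collapse_of_mem_Icc ⟨by linarith, le_rfl⟩]
  suffices hpush : IsPushforward (fun z => ramp (z - x)) (F ∘ collapse x) (twoPoint (F x)) from
    hpush.utilityT_eq (isUF_ramp_sub x) hgap (twoPoint_mem_mSet (mem_Icc_of_mem_mSet hF x))
  refine ⟨fun a z haz => ?_, fun a z hza => ?_⟩ <;> rw [twoPoint_apply] <;> split_ifs with h0 h1
  · exact absurd (haz.trans_lt h0) (le_max_left _ _).not_gt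
  · have ha : a ≤ x + 1 := by
      by_contra! ha
      have : ramp (a - x) = 1 := by
        rw [ramp, min_eq_left (by linarith), max_eq_right zero_le_one]
      linarith
    exact (hgap.1 ha).trans_eq hx'
  · exact (h01 a).2
  · exact (h01 a).1
  · have ha : x ≤ a := by
      by_contra! ha
      have : ramp (a - x) = 0 := max_eq_left ((min_le_right _ _).trans (by linarith))
      linarith
    exact hx.symm.trans_le (hgap.1 ha)
  · exact absurd hza ((max_le zero_le_one (min_le_left _ _)).trans (not_lt.1 h1)).not_gt

/-! ### Distortions -/

lemma le_rightLim_of_forall_gt {f : ℝ → ℝ} (hf : Monotone f) {x c : ℝ}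
    (h : ∀ y, x < y → c ≤ f y) : c ≤ Function.rightLim f x :=
  ge_of_tendsto (hf.tendsto_rightLim x) (eventually_mem_nhdsWithin.mono h)

lemma rightLim_eq_of_forall_lt_le {f G : ℝ → ℝ} (hG : ∀ x, ContinuousWithinAt G (Ici x) x)
    (hle : ∀ x, f x ≤ G x) (hlt : ∀ y x, y < x → G y ≤ f x) : Function.rightLim f = G := by
  ext x
  have hlim : Tendsto G (𝓝[>] x) (𝓝 (G x)) := continuousWithinAt_Ioi_iff_Ici.2 (hG x)
  exact rightLim_eq_of_tendsto (tendsto_of_tendsto_of_tendsto_of_le_of_le' tendsto_const_nhds hlim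
    (eventually_mem_nhdsWithin.mono fun y hy => hlt x y hy) (Eventually.of_forall hle))

lemma IsDF.apply_le_apply {d F G : ℝ → ℝ} (hd : IsDF d) (hF : F ∈ mSet) (hG : G ∈ mSet) {x y : ℝ}
    (h : F x ≤ G y) : d (F x) ≤ d (G y) :=
  hd.1 (mem_Icc_of_mem_mSet hF x) (mem_Icc_of_mem_mSet hG y) h

lemma IsDF.monotone_comp {d F : ℝ → ℝ} (hd : IsDF d) (hF : F ∈ mSet) : Monotone (d ∘ F) :=
  fun _ _ h => hd.apply_le_apply hF hF (hF.1 h)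

lemma IsDF.mem_Icc {d : ℝ → ℝ} (hd : IsDF d) {p : ℝ} (hp : p ∈ Icc (0 : ℝ) 1) :
    d p ∈ Icc (0 : ℝ) 1 :=
  ⟨hd.2.1.ge.trans (hd.1 (left_mem_Icc.2 zero_le_one) hp hp.1),
    (hd.1 hp (right_mem_Icc.2 zero_le_one) hp.2).trans hd.2.2.le⟩

lemma distortT_mem_mSet {d F : ℝ → ℝ} (hd : IsDF d) (hF : F ∈ mSet) : distortT d F ∈ mSet := by
  have hm := hd.monotone_comp hF
  have h01 (x : ℝ) : distortT d F x ∈ Icc (0 : ℝ) 1 :=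
    ⟨(hd.mem_Icc (mem_Icc_of_mem_mSet hF x)).1.trans (hm.le_rightLim le_rfl),
      (hm.rightLim_le (lt_add_one x)).trans (hd.mem_Icc (mem_Icc_of_mem_mSet hF _)).2⟩
  obtain ⟨a, ha⟩ := hF.2.2.1
  obtain ⟨b, hb⟩ := hF.2.2.2
  have hda : d (F a) = 0 := by rw [ha a le_rfl, hd.2.1]
  have hdb : d (F b) = 1 := by rw [hb b le_rfl, hd.2.2]
  exact mem_mSet_of_eq_zero_of_eq_one hm.rightLim hm.stieltjesFunction.right_continuous h01
    (((hm.rightLim_le (sub_one_lt a)).trans_eq hda).antisymm (h01 _).1)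
    ((h01 b).2.antisymm (hdb.ge.trans (hm.le_rightLim le_rfl)))

lemma IsPushforward.distortT {d u F G : ℝ → ℝ} (h : IsPushforward u F G) (hd : IsDF d)
    (hu : IsUF u) (hF : F ∈ mSet) (hG : G ∈ mSet) :
    IsPushforward u (distortT d F) (distortT d G) := by
  have hdF := hd.monotone_comp hF
  have hdG := hd.monotone_comp hG
  refine ⟨fun a x hax => le_rightLim_of_forall_gt hdG fun y hxy => ?_,
    fun a x hxa => le_rightLim_of_forall_gt hdF fun b hab => ?_⟩
  · have hnear : ∀ᶠ b in 𝓝[>] a, u b < y :=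
      (hu.2.continuousAt.eventually_lt_const (hax.trans_lt hxy)).filter_mono nhdsWithin_le_nhds
    obtain ⟨b, hby, hab⟩ := (hnear.and self_mem_nhdsWithin).exists
    exact (hdF.rightLim_le hab).trans (hd.apply_le_apply hF hG (h.le_of_le hby.le))
  · obtain ⟨y, hxy, hya⟩ := exists_between hxa
    exact (hdG.rightLim_le hxy).trans
      (hd.apply_le_apply hG hF (h.le_of_lt (hya.trans_le (hu.1 hab.le))))

/-! ### Intertwining utility transforms -/

/-- `T ∘ T^u = T^{u'} ∘ T` on compactly supported distributions. -/
def Intertwines (T : (ℝ → ℝ) → ℝ → ℝ) (u u' : ℝ → ℝ) : Prop :=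
  ∀ F ∈ mSet, utilityT u' (T F) = T (utilityT u F)

/-- `𝒰 ∘ T = T ∘ 𝒰`, where `𝒰` is the set of all utility transforms; the two conjuncts are the two
inclusions. -/
def CommutesWithUtilities (T : (ℝ → ℝ) → ℝ → ℝ) : Prop :=
  (∀ u : ℝ → ℝ, IsUF u → ∃ u' : ℝ → ℝ, IsUF u' ∧ Intertwines T u u') ∧
    ∀ u' : ℝ → ℝ, IsUF u' → ∃ u : ℝ → ℝ, IsUF u ∧ Intertwines T u u'

section Intertwines

variable {S T : (ℝ → ℝ) → ℝ → ℝ} {u u' v w : ℝ → ℝ}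

lemma Intertwines.comp (hT : Intertwines T u u') (hS : Intertwines S w u)
    (hSm : MapsTo S mSet mSet) : Intertwines (T ∘ S) w u' := fun F hF => by
  simp only [Function.comp_apply, hT _ (hSm hF), hS F hF]

lemma Intertwines.congr (hS : Intertwines S u u') (hu : Monotone u) (h : EqOn T S mSet) :
    Intertwines T u u' := fun F hF => by
  rw [h hF, h (utilityT_mem_mSet hu hF), hS F hF]

lemma Intertwines.isPushforward (hT : Intertwines T u u') (hTm : MapsTo T mSet mSet)
    (hu' : Monotone u') {F : ℝ → ℝ} (hF : F ∈ mSet) :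
    IsPushforward u' (T F) (T (utilityT u F)) :=
  hT F hF ▸ isPushforward_utilityT hu' (hTm hF)

lemma intertwines_utilityT (hv : Measurable v) (hu : Measurable u) (hu' : Measurable u')
    (h : Function.Semiconj v u u') : Intertwines (utilityT v) u u' := fun F hF => by
  rw [utilityT_comp hu' hv hF, utilityT_comp hv hu hF, h.comp_eq]

lemma intertwines_distortT {d : ℝ → ℝ} (hd : IsDF d) (hu : IsUF u) :
    Intertwines (distortT d) u u := fun _ hF =>
  have hm := utilityT_mem_mSet hu.1 hF
  ((isPushforward_utilityT hu.1 hF).distortT hd hu hF hm).utilityT_eq hu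
    (distortT_mem_mSet hd hF) (distortT_mem_mSet hd hm)

lemma Intertwines.semiconj (hT : Intertwines T u u') (hu : Measurable u) (hu' : Measurable u')
    (hv : ∀ c, T (pointMass c) = pointMass (v c)) : Function.Semiconj v u u' := fun c => by
  apply pointMass_injective
  rw [← utilityT_pointMass hu', ← hv, ← hv, ← utilityT_pointMass hu,
    hT _ (pointMass_mem_mSet c)]

end Intertwines

lemma IsUF.comp {u v : ℝ → ℝ} (hu : IsUF u) (hv : IsUF v) : IsUF (u ∘ v) :=
  ⟨hu.1.comp hv.1, hu.2.comp hv.2⟩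

lemma isUF_const (c : ℝ) : IsUF fun _ => c := ⟨monotone_const, continuous_const⟩

lemma isUF_orderIso (e : ℝ ≃o ℝ) : IsUF e := ⟨e.monotone, e.continuous⟩

lemma utilityT_symm_utilityT (e : ℝ ≃o ℝ) {F : ℝ → ℝ} (hF : F ∈ mSet) :
    utilityT e.symm (utilityT e F) = F := by
  have hid : e.symm ∘ e = id := funext e.symm_apply_apply
  rw [utilityT_comp e.symm.continuous.measurable e.continuous.measurable hF, hid, utilityT_id hF]

lemma isUF_lineMap_div {a b p q : ℝ} (hab : a < b) (hpq : p ≤ q) :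
    IsUF fun x => AffineMap.lineMap p q ((x - a) / (b - a)) := by
  refine ⟨fun x y hxy => AffineMap.lineMap_mono hpq ?_,
    AffineMap.lineMap_continuous.comp (by fun_prop)⟩
  have : 0 ≤ b - a := sub_nonneg.2 hab.le
  gcongr

lemma commutesWithUtilities_distortT_comp_utilityT {d : ℝ → ℝ} (hd : IsDF d) (e : ℝ ≃o ℝ) :
    CommutesWithUtilities (distortT d ∘ utilityT e) := by
  have he := isUF_orderIso e
  have hs := isUF_orderIso e.symm
  have hcomm {u u' : ℝ → ℝ} (hu : IsUF u) (hu' : IsUF u') (h : Function.Semiconj e u u') :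
      Intertwines (distortT d ∘ utilityT e) u u' :=
    (intertwines_distortT hd hu').comp
      (intertwines_utilityT he.2.measurable hu.2.measurable hu'.2.measurable h)
      fun _ => utilityT_mem_mSet he.1
  refine ⟨fun u hu => ?_, fun u' hu' => ?_⟩
  · have hu' : IsUF (e ∘ u ∘ e.symm) := he.comp (hu.comp hs)
    exact ⟨_, hu', hcomm hu hu' fun x => by simp⟩
  · have hu : IsUF (e.symm ∘ u' ∘ e) := hs.comp (hu'.comp he)
    exact ⟨_, hu, hcomm hu hu' fun x => by simp⟩

lemma CommutesWithUtilities.congr {S T : (ℝ → ℝ) → ℝ → ℝ} (hS : CommutesWithUtilities S)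
    (h : EqOn T S mSet) : CommutesWithUtilities T := by
  refine ⟨fun u hu => ?_, fun u' hu' => ?_⟩
  · obtain ⟨u', hu', hcomm⟩ := hS.1 u hu
    exact ⟨u', hu', hcomm.congr hu.1 h⟩
  · obtain ⟨u, hu, hcomm⟩ := hS.2 u' hu'
    exact ⟨u, hu, hcomm.congr hu.1 h⟩

/-! ### Transforms intertwining every utility with itself -/

section SelfIntertwining

variable {S : (ℝ → ℝ) → ℝ → ℝ}

/-- The distortion function read off a transform `S`: if `S` maps the two-point distribution of
level `p` to a distribution on `{0, 1}`, the value at `1 / 2` is the level of its image. -/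
def levelMap (S : (ℝ → ℝ) → ℝ → ℝ) (p : ℝ) : ℝ := S (twoPoint p) (1 / 2)

lemma levelMap_bounds (hS : MapsTo S mSet mSet) (hcomm : ∀ u, IsUF u → Intertwines S u u)
    {F : ℝ → ℝ} (hF : F ∈ mSet) (x : ℝ) :
    levelMap S (F x) ≤ S F x ∧ ∀ y < x, S F y ≤ levelMap S (F x) := by
  let H : ℝ → ℝ := F ∘ collapse x
  have hc := isUF_collapse x
  have hr := isUF_ramp_sub x
  have hH : H ∈ mSet := comp_mem_mSet_of_surjective hc (surjective_collapse x) hF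
  have hclose : IsPushforward (collapse x) (S H) (S F) := by
    have := (hcomm _ hc).isPushforward hS hc.1 hH
    rwa [utilityT_comp_self_of_surjective hc (surjective_collapse x) hF] at this
  have hramp : IsPushforward (fun z => ramp (z - x)) (S H) (S (twoPoint (F x))) := by
    have := (hcomm _ hr).isPushforward hS hr.1 hH
    rwa [utilityT_ramp_comp_collapse hF] at this
  have hcx : collapse x x = x := collapse_of_mem_Icc ⟨le_rfl, by linarith⟩
  have hcx' : collapse x (x + 1) = x := collapse_of_mem_Icc ⟨by linarith, le_rfl⟩
  constructor
  · calc levelMap S (F x) ≤ S H (x + 1) := hramp.le_of_lt (by norm_num [ramp])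
      _ ≤ S F x := hclose.le_of_le hcx'.le
  · intro y hy
    calc S F y ≤ S H x := hclose.le_of_lt (hy.trans_eq hcx.symm)
      _ ≤ levelMap S (F x) := hramp.le_of_le (by norm_num [ramp])

lemma isDF_levelMap (hS : MapsTo S mSet mSet) (hcomm : ∀ u, IsUF u → Intertwines S u u)
    (hpoint : ∀ c, S (pointMass c) = pointMass c) : IsDF (levelMap S) := by
  refine ⟨fun p hp q hq hpq => ?_, ?_, ?_⟩
  · rcases hpq.eq_or_lt with rfl | hlt
    · rfl
    have hbounds := levelMap_bounds hS hcomm ramp_mem_mSet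
    calc levelMap S p = levelMap S (ramp p) := by rw [ramp_of_mem_Icc hp]
      _ ≤ S ramp p := (hbounds p).1
      _ ≤ levelMap S (ramp q) := (hbounds q).2 p hlt
      _ = levelMap S q := by rw [ramp_of_mem_Icc hq]
  · rw [levelMap, twoPoint_zero, hpoint, pointMass_apply, if_neg (by norm_num)]
  · rw [levelMap, twoPoint_one, hpoint, pointMass_apply, if_pos (by norm_num)]

lemma eqOn_distortT_levelMap (hS : MapsTo S mSet mSet)
    (hcomm : ∀ u, IsUF u → Intertwines S u u) : EqOn S (distortT (levelMap S)) mSet :=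
  fun _ hF => (rightLim_eq_of_forall_lt_le (hS hF).2.1
    (fun x => (levelMap_bounds hS hcomm hF x).1)
    fun y x hyx => (levelMap_bounds hS hcomm hF x).2 y hyx).symm

end SelfIntertwining

/-! ### The action on point masses -/

/-- An affine utility moves any two points to two points separated by `v`. -/
lemma injective_of_forall_exists_semiconj {v : ℝ → ℝ} {p q : ℝ} (hne : v p ≠ v q)
    (h : ∀ u, IsUF u → ∃ u', Function.Semiconj v u u') : Function.Injective v := by
  wlog hpq : p < q generalizing p q
  · exact this hne.symm ((ne_of_apply_ne v hne).lt_or_gt.resolve_left hpq)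
  refine Function.Injective.of_lt_imp_ne fun a b hab heq => hne ?_
  obtain ⟨u', hu'⟩ := h _ (isUF_lineMap_div hab hpq.le)
  have ha : v p = u' (v a) := by simpa using hu' a
  have hb : v q = u' (v b) := by simpa [div_self (sub_pos.2 hab).ne'] using hu' b
  rw [ha, hb, heq]

section PointMasses

variable {T : (ℝ → ℝ) → ℝ → ℝ}

/-- Matching the constant utilities on either side shows that `T` maps point masses to point masses
and reaches each of them. -/
lemma CommutesWithUtilities.exists_surjective_apply_pointMass (hcomm : CommutesWithUtilities T)
    (hT : MapsTo T mSet mSet) :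
    ∃ v, Function.Surjective v ∧ ∀ c, T (pointMass c) = pointMass (v c) := by
  have hrange (c : ℝ) : ∃ b, T (pointMass b) = pointMass c := by
    obtain ⟨u, hu, h⟩ := hcomm.2 _ (isUF_const c)
    have h0 := pointMass_mem_mSet 0
    exact ⟨u 0, by rw [← utilityT_pointMass hu.2.measurable, ← h _ h0, utilityT_const _ (hT h0)]⟩
  have himage (c : ℝ) : ∃ b, T (pointMass c) = pointMass b := by
    obtain ⟨u', hu', h⟩ := hcomm.1 _ (isUF_const c)
    obtain ⟨b, hb⟩ := hrange 0
    have hmem := pointMass_mem_mSet b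
    exact ⟨u' 0, by rw [← utilityT_pointMass hu'.2.measurable, ← hb, h _ hmem,
      utilityT_const _ hmem]⟩
  choose v hv using himage
  refine ⟨v, fun c => ?_, hv⟩
  obtain ⟨b, hb⟩ := hrange c
  exact ⟨b, pointMass_injective (by rw [← hv, hb])⟩

lemma CommutesWithUtilities.exists_orderIso_apply_pointMass (hcomm : CommutesWithUtilities T)
    (hT : MapsTo T mSet mSet) (hanti : Antitone fun c => T (pointMass c)) :
    ∃ e : ℝ ≃o ℝ, ∀ c, T (pointMass c) = pointMass (e c) := by
  obtain ⟨v, hsurj, hv⟩ := hcomm.exists_surjective_apply_pointMass hT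
  have hmono : Monotone v := fun a b hab =>
    pointMass_le_pointMass_iff.1 (by simpa only [hv] using hanti hab)
  have hinj : Function.Injective v := by
    obtain ⟨p, hp⟩ := hsurj 0
    obtain ⟨q, hq⟩ := hsurj 1
    have hne : v p ≠ v q := by simp [hp, hq]
    refine injective_of_forall_exists_semiconj hne fun u hu => ?_
    obtain ⟨u', hu', h⟩ := hcomm.1 u hu
    exact ⟨u', h.semiconj hu.2.measurable hu'.2.measurable hv⟩
  exact ⟨(hmono.strictMono_of_injective hinj).orderIsoOfSurjective v hsurj, hv⟩

lemma CommutesWithUtilities.intertwines_comp_utilityT_symm (hcomm : CommutesWithUtilities T)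
    {e : ℝ ≃o ℝ} (he : ∀ c, T (pointMass c) = pointMass (e c)) {w : ℝ → ℝ} (hw : IsUF w) :
    Intertwines (T ∘ utilityT e.symm) w w := by
  have hs := isUF_orderIso e.symm
  have hu : IsUF (e.symm ∘ w ∘ e) := hs.comp (hw.comp (isUF_orderIso e))
  obtain ⟨u', hu', h⟩ := hcomm.1 _ hu
  have hsemi := h.semiconj hu.2.measurable hu'.2.measurable he
  obtain rfl : u' = w := funext fun x => by simpa using (hsemi (e.symm x)).symm
  exact h.comp (intertwines_utilityT hs.2.measurable hu'.2.measurable hu.2.measurable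
    fun x => by simp) fun _ => utilityT_mem_mSet hs.1

end PointMasses

theorem stmt3_general {T : (ℝ → ℝ) → ℝ → ℝ} (hT : MapsTo T mSet mSet)
    (hanti : Antitone fun c => T (pointMass c)) :
    CommutesWithUtilities T ↔
      ∃ d u : ℝ → ℝ, IsDF d ∧ StrictMono u ∧ Continuous u ∧ Function.Surjective u ∧
        EqOn T (distortT d ∘ utilityT u) mSet := by
  constructor
  · intro hcomm
    obtain ⟨e, he⟩ := hcomm.exists_orderIso_apply_pointMass hT hanti
    have hu := isUF_orderIso e
    have hs := isUF_orderIso e.symm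
    let S := T ∘ utilityT e.symm
    have hS : MapsTo S mSet mSet := fun _ hF => hT (utilityT_mem_mSet hs.1 hF)
    have hSw (w : ℝ → ℝ) (hw : IsUF w) : Intertwines S w w :=
      hcomm.intertwines_comp_utilityT_symm he hw
    have hSpoint (c : ℝ) : S (pointMass c) = pointMass c := by
      simp only [S, Function.comp_apply, utilityT_pointMass hs.2.measurable, he,
        e.apply_symm_apply]
    refine ⟨levelMap S, e, isDF_levelMap hS hSw hSpoint, e.strictMono, e.continuous,
      e.surjective, fun F hF => ?_⟩
    calc T F = S (utilityT e F) := (congrArg T (utilityT_symm_utilityT e hF)).symm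
      _ = distortT (levelMap S) (utilityT e F) :=
          eqOn_distortT_levelMap hS hSw (utilityT_mem_mSet hu.1 hF)
  · rintro ⟨d, u, hd, hmono, -, hsurj, heq⟩
    exact (commutesWithUtilities_distortT_comp_utilityT hd
      (hmono.orderIsoOfSurjective u hsurj)).congr heq

/-- A monotone map `T : M → M` commutes with the set `𝒰` of all utility
transforms (`𝒰 ∘ T = T ∘ 𝒰` as sets of maps `M → M`) if and only if
`T = T_d ∘ T^u` for some distortion function `d` and some strictly increasing,
continuous, surjective `u : ℝ → ℝ`. -/
theorem stmt3 (T : (ℝ → ℝ) → ℝ → ℝ) (hT : ∀ F ∈ mSet, T F ∈ mSet)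
    (hmono : ∀ F ∈ mSet, ∀ G ∈ mSet, (∀ x, G x ≤ F x) → ∀ x, T G x ≤ T F x) :
    ((∀ u : ℝ → ℝ, IsUF u → ∃ u' : ℝ → ℝ, IsUF u' ∧
        ∀ F ∈ mSet, utilityT u' (T F) = T (utilityT u F)) ∧
      (∀ u' : ℝ → ℝ, IsUF u' → ∃ u : ℝ → ℝ, IsUF u ∧
        ∀ F ∈ mSet, utilityT u' (T F) = T (utilityT u F))) ↔
      ∃ d u : ℝ → ℝ, IsDF d ∧ StrictMono u ∧ Continuous u ∧ Function.Surjective u ∧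
        ∀ F ∈ mSet, T F = distortT d (utilityT u F) :=
  stmt3_general hT fun a b hab => hmono _ (pointMass_mem_mSet a) _ (pointMass_mem_mSet b)
    (pointMass_le_pointMass_iff.2 hab)
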